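/- Symplectic eigenvalues of the Bob–receiver covariance matrix: Let η ∈ [0,1] and N_a, N_b ≥ 0 be real numbers, and write η̄ = 1 − η. Let V^{BC} be the real 4×4 matrix with rows (2(ηN_a+η̄N_b)+1, 0, 2√η̄·√(N_b(N_b+1)), 0), (0, 2(ηN_a+η̄N_b)+1, 0, −2√η̄·√(N_b(N_b+1))), (2√η̄·√(N_b(N_b+1)), 0, 2N_b+1, 0), (0, −2√η̄·√(N_b(N_b+1)), 0, 2N_b+1), and let J be the block-diagonal 4×4 matrix with two diagonal blocks equal to [[0,1],[−1,0]]. Then the characteristic polynomial of J·V^{BC} equals (X² + (λ_{BC}^+)²)·(X² + (λ_{BC}^−)²), where λ_{BC}^± = η|N_a − N_b| ± √(η²(N_a − N_b)² + 2η(2N_aN_b + N_a + N_b) + 1); equivalently, the eigenvalues of i·J·V^{BC} are λ_{BC}^+, −λ_{BC}^+, λ_{BC}^−, −λ_{BC}^−. -/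

import Mathlib

open Matrix Polynomial

/-!
Up to a permutation of the quadratures, `V^{BC}` is the direct sum of a momentum block `P` and a
position block `Q`, so `J * V^{BC}` is block off-diagonal with blocks `-Q` and `P`. Its
characteristic polynomial is therefore that of `-Q * P` evaluated at `X ^ 2`, and the squared
symplectic eigenvalues are the two eigenvalues of the `2 × 2` matrix `Q * P`, determined by its
trace and determinant. For local variances `a`, `b` and opposite correlations `s`, `-s` these are
`a² + b² - 2s²` and `(ab - s²)²`, the sum and product of `(u + r)²` and `(u - r)²` as soon as
`2u = ±(a - b)` and `r² - u² = ab - s²`.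
-/

section OffDiagonalBlocks

variable {m n R : Type*} [Fintype m] [DecidableEq m] [Fintype n] [DecidableEq n] [CommRing R]

theorem det_X_sq_sub_map_C_eq_expand_charpoly (A : Matrix n n R) :
    (scalar n (X ^ 2 : R[X]) - A.map C).det = expand R 2 A.charpoly := by
  rw [Matrix.charpoly, AlgHom.map_det]
  congr 1
  ext1 i j
  by_cases hij : i = j <;> simp [hij]

theorem X_pow_mul_charpoly_fromBlocks_zero_diag (A : Matrix m n R) (B : Matrix n m R) :
    X ^ Fintype.card m * (fromBlocks 0 A B 0).charpoly =
      X ^ Fintype.card n * expand R 2 (A * B).charpoly := by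
  have hmul : charmatrix (fromBlocks 0 A B 0) *
      fromBlocks (scalar m X) 0 (B.map C) (1 : Matrix n n R[X]) =
      fromBlocks (scalar m (X ^ 2) - (A * B).map C) (-A.map C) 0 (scalar n X) := by
    rw [charmatrix_fromBlocks, fromBlocks_multiply]
    simp [charmatrix_zero, sub_eq_add_neg, pow_two, -scalar_apply, scalar_comm, Commute.all]
  have hdet := congrArg det hmul
  rw [det_mul, det_fromBlocks_zero₁₂, det_fromBlocks_zero₂₁,
    det_X_sq_sub_map_C_eq_expand_charpoly] at hdet
  simpa [Matrix.charpoly, mul_comm] using hdet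

theorem charpoly_fromBlocks_zero_diag (A B : Matrix n n R) :
    (fromBlocks 0 A B 0).charpoly = expand R 2 (A * B).charpoly :=
  (isRegular_X_pow _).left.eq_iff.mp <| X_pow_mul_charpoly_fromBlocks_zero_diag A B

theorem charpoly_J_mul_fromBlocks_diag (P Q : Matrix n n R) :
    (J n R * fromBlocks P 0 0 Q).charpoly = expand R 2 (-(Q * P)).charpoly := by
  have hmul : J n R * fromBlocks P 0 0 Q = fromBlocks 0 (-Q) P 0 := by
    simp [J, fromBlocks_multiply]
  rw [hmul, charpoly_fromBlocks_zero_diag, neg_mul]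

end OffDiagonalBlocks

section TwoModes

variable {R : Type*} [CommRing R]

theorem charpoly_neg_fin_two_eq_mul {M : Matrix (Fin 2) (Fin 2) R} {p q : R}
    (htrace : M.trace = p + q) (hdet : M.det = p * q) :
    (-M).charpoly = (X + C p) * (X + C q) := by
  nontriviality R
  have hdet_neg : (-M).det = p * q := by simp [det_neg, hdet]
  rw [charpoly_fin_two, trace_neg, htrace, hdet_neg]
  simp only [map_neg, map_add, map_mul]
  ring

variable (R) in
/-- The symplectic form of two modes in the mode-by-mode ordering `(x₁, p₁, x₂, p₂)` of the
quadratures. -/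
def twoModeForm : Matrix (Fin 4) (Fin 4) R :=
  !![0, 1, 0, 0; -1, 0, 0, 0; 0, 0, 0, 1; 0, 0, -1, 0]

/-- The standard form of a two-mode covariance matrix, in the quadrature ordering
`(x₁, p₁, x₂, p₂)`: local variances `a` and `b`, position correlation `c`, momentum
correlation `d`. -/
def standardForm (a b c d : R) : Matrix (Fin 4) (Fin 4) R :=
  !![a, 0, c, 0; 0, a, 0, d; c, 0, b, 0; 0, d, 0, b]

/-- The passage from the ordering `(p₁, p₂, x₁, x₂)` of the quadratures of two modes, for which
the symplectic form is `Matrix.J`, to the mode-by-mode ordering `(x₁, p₁, x₂, p₂)`. -/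
def quadratureEquiv : Fin 2 ⊕ Fin 2 ≃ Fin 4 where
  toFun := Sum.elim ![1, 3] ![0, 2]
  invFun := ![.inr 0, .inl 0, .inr 1, .inl 1]
  left_inv := by decide
  right_inv := by decide

theorem reindex_quadratureEquiv_J :
    reindex quadratureEquiv quadratureEquiv (J (Fin 2) R) = twoModeForm R := by
  ext i j
  fin_cases i <;> fin_cases j <;> simp [quadratureEquiv, J, twoModeForm]

theorem reindex_quadratureEquiv_fromBlocks_diag (a b c d : R) :
    reindex quadratureEquiv quadratureEquiv (fromBlocks !![a, d; d, b] 0 0 !![a, c; c, b]) =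
      standardForm a b c d := by
  ext i j
  fin_cases i <;> fin_cases j <;> rfl

theorem charpoly_twoModeForm_mul_standardForm (a b c d : R) :
    (twoModeForm R * standardForm a b c d).charpoly =
      expand R 2 (-(!![a, c; c, b] * !![a, d; d, b])).charpoly := by
  rw [← reindex_quadratureEquiv_J, ← reindex_quadratureEquiv_fromBlocks_diag]
  simp only [reindex_apply, submatrix_mul_equiv]
  rw [← reindex_apply, charpoly_reindex, charpoly_J_mul_fromBlocks_diag]

theorem charpoly_twoModeForm_mul_standardForm_neg {a b s u r : R}
    (hu : (2 * u) ^ 2 = (a - b) ^ 2) (hr : r ^ 2 - u ^ 2 = a * b - s ^ 2) :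
    (twoModeForm R * standardForm a b s (-s)).charpoly =
      (X ^ 2 + C ((u + r) ^ 2)) * (X ^ 2 + C ((u - r) ^ 2)) := by
  have htrace : (!![a, s; s, b] * !![a, -s; -s, b]).trace = (u + r) ^ 2 + (u - r) ^ 2 := by
    simp only [trace_fin_two, mul_fin_two, of_apply, cons_val]
    linear_combination -hu - 2 * hr
  have hdet : (!![a, s; s, b] * !![a, -s; -s, b]).det = (u + r) ^ 2 * (u - r) ^ 2 := by
    simp only [det_mul, det_fin_two_of]
    linear_combination -(r ^ 2 - u ^ 2 + (a * b - s ^ 2)) * hr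
  rw [charpoly_twoModeForm_mul_standardForm, charpoly_neg_fin_two_eq_mul htrace hdet]
  simp only [map_mul, map_add, expand_X, expand_C]

end TwoModes

/-- Symplectic eigenvalues of the Bob–receiver covariance matrix:
for `η ∈ [0,1]`, `η̄ = 1 − η`, and `N_a, N_b ≥ 0`, the characteristic polynomial of
`J·V^{BC}` equals `(X² + (λ_{BC}^+)²)(X² + (λ_{BC}^−)²)`, where
`λ_{BC}^± = η|N_a−N_b| ± √(η²(N_a−N_b)² + 2η(2N_aN_b+N_a+N_b) + 1)`. -/
theorem symplectic_eigenvalues_BC (η Na Nb : ℝ)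
    (hη : 0 ≤ η) (hη' : η ≤ 1) (hNa : 0 ≤ Na) (hNb : 0 ≤ Nb) :
    let ηb : ℝ := 1 - η
    let s : ℝ := 2 * Real.sqrt ηb * Real.sqrt (Nb * (Nb + 1))
    let VBC : Matrix (Fin 4) (Fin 4) ℝ :=
      !![2 * (η * Na + ηb * Nb) + 1, 0, s, 0;
         0, 2 * (η * Na + ηb * Nb) + 1, 0, -s;
         s, 0, 2 * Nb + 1, 0;
         0, -s, 0, 2 * Nb + 1]
    let J : Matrix (Fin 4) (Fin 4) ℝ :=
      !![0, 1, 0, 0;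
         -1, 0, 0, 0;
         0, 0, 0, 1;
         0, 0, -1, 0]
    let lp : ℝ := η * |Na - Nb| +
      Real.sqrt (η ^ 2 * (Na - Nb) ^ 2 + 2 * η * (2 * Na * Nb + Na + Nb) + 1)
    let lm : ℝ := η * |Na - Nb| -
      Real.sqrt (η ^ 2 * (Na - Nb) ^ 2 + 2 * η * (2 * Na * Nb + Na + Nb) + 1)
    (J * VBC).charpoly = (X ^ 2 + C (lp ^ 2)) * (X ^ 2 + C (lm ^ 2)) := by
  intro ηb s _ _ _ _
  have hs : s ^ 2 = 4 * (1 - η) * (Nb * (Nb + 1)) := by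
    simp only [s, ηb, mul_pow]
    rw [Real.sq_sqrt (sub_nonneg.mpr hη'), Real.sq_sqrt (by positivity)]
    ring
  have hu : (2 * (η * |Na - Nb|)) ^ 2 =
      (2 * (η * Na + ηb * Nb) + 1 - (2 * Nb + 1)) ^ 2 := by
    simp only [mul_pow, sq_abs, ηb]
    ring
  have hr : √(η ^ 2 * (Na - Nb) ^ 2 + 2 * η * (2 * Na * Nb + Na + Nb) + 1) ^ 2 -
      (η * |Na - Nb|) ^ 2 = (2 * (η * Na + ηb * Nb) + 1) * (2 * Nb + 1) - s ^ 2 := by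
    rw [Real.sq_sqrt (by positivity), mul_pow, sq_abs, hs]
    simp only [ηb]
    ring
  exact charpoly_twoModeForm_mul_standardForm_neg hu hr
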